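/- arXiv:2604.12534 — 6 statements merged into one kernel-verified Lean document; each statement's English description precedes it below -/
import Mathlib

section
/- Let τ be a type, simP : τ → τ → ℝ with 0 ≤ simP(s,t) ≤ 1 for all s,t and simP(t,t) = 1 for every t, let λ ∈ (0,1), and let w_p : τ → ℝ be a weight function with w_p(t) > 0 for all t. Then for every literal (P, a⃗) with a⃗ a nonempty finite vector over τ, the weighted literal similarity of the literal with itself equals 1: simL^{weight,λ}((P,a⃗),(P,a⃗)) = 1, for any choice function β selecting entries attaining the maxima. -/
open Classical Finset

/-- Maximum of a real-valued function over a nonempty `Fin n`. -/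
noncomputable def fmax {n : ℕ} (hn : 0 < n) (f : Fin n → ℝ) : ℝ :=
  Finset.univ.sup' ⟨⟨0, hn⟩, Finset.mem_univ _⟩ f

/-- Ordered (positional) similarity between two vectors of symbols. -/
noncomputable def simOrd {τ : Type*} (simP : τ → τ → ℝ) {m n : ℕ}
    (a : Fin m → τ) (b : Fin n → τ) : ℝ :=
  (∑ i : Fin (min m n),
      simP (a ⟨i.1, lt_of_lt_of_le i.2 (Nat.min_le_left m n)⟩)
           (b ⟨i.1, lt_of_lt_of_le i.2 (Nat.min_le_right m n)⟩)) / ((min m n : ℕ) : ℝ)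

/-- Best-match (unordered) similarity between two nonempty vectors of symbols. -/
noncomputable def simUnord {τ : Type*} (simP : τ → τ → ℝ) {m n : ℕ}
    (hm : 0 < m) (hn : 0 < n) (a : Fin m → τ) (b : Fin n → τ) : ℝ :=
  ((∑ i : Fin m, fmax hn (fun j => simP (a i) (b j))) +
   (∑ j : Fin n, fmax hm (fun i => simP (b j) (a i)))) / ((m : ℝ) + (n : ℝ))

/-- Parameter similarity: convex combination of ordered and unordered similarity. -/
noncomputable def simPara {τ : Type*} (simP : τ → τ → ℝ) (lam : ℝ) {m n : ℕ}
    (hm : 0 < m) (hn : 0 < n) (a : Fin m → τ) (b : Fin n → τ) : ℝ :=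
  lam * simOrd simP a b + (1 - lam) * simUnord simP hm hn a b

/-- Ordered weight aggregation `w_ord`. -/
noncomputable def wOrd {τ : Type*} (wp : τ → ℝ) {m n : ℕ}
    (a : Fin m → τ) (b : Fin n → τ) : ℝ :=
  ∑ i : Fin (min m n),
      wp (a ⟨i.1, lt_of_lt_of_le i.2 (Nat.min_le_left m n)⟩) *
      wp (b ⟨i.1, lt_of_lt_of_le i.2 (Nat.min_le_right m n)⟩)

/-- Unordered weight aggregation `w_unord`, relative to a choice function `beta`
selecting for each symbol a best-matching entry of the other vector. -/
noncomputable def wUnord {τ : Type*} (wp : τ → ℝ)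
    (beta : τ → (k : ℕ) → (Fin k → τ) → τ) {m n : ℕ}
    (a : Fin m → τ) (b : Fin n → τ) : ℝ :=
  (∑ i : Fin m, wp (a i) * wp (beta (a i) n b)) +
  (∑ j : Fin n, wp (b j) * wp (beta (b j) m a))

/-- Weighted literal similarity between literals `(P, a)` and `(Q, b)`. -/
noncomputable def simLweight {τ : Type*} (simP : τ → τ → ℝ) (wp : τ → ℝ)
    (beta : τ → (k : ℕ) → (Fin k → τ) → τ) (lam : ℝ) {m n : ℕ}
    (hm : 0 < m) (hn : 0 < n) (P Q : τ) (a : Fin m → τ) (b : Fin n → τ) : ℝ :=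
  (wp P * wp Q * simP P Q +
      simPara simP lam hm hn a b *
        (lam * wOrd wp a b + (1 - lam) * wUnord wp beta a b)) /
  (wp P * wp Q + (lam * wOrd wp a b + (1 - lam) * wUnord wp beta a b))

/-!
The similarity of two literals is a weighted mean of the similarity of their predicates and that of
their vectors. On the diagonal both are `1`: every entry is a best match for itself. A weighted mean
of ones is `1` as soon as the total weight is nonzero.
-/

theorem fmax_eq_of_forall_le {n : ℕ} (hn : 0 < n) {f : Fin n → ℝ} {i : Fin n}
    (hi : ∀ j, f j ≤ f i) : fmax hn f = f i :=
  le_antisymm (Finset.sup'_le _ _ fun j _ => hi j) (Finset.le_sup' f (Finset.mem_univ i))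

section Similarity

variable {τ : Type*} {simP : τ → τ → ℝ} {m : ℕ} {a : Fin m → τ}

theorem simOrd_self (hm : 0 < m) (ha : ∀ i, simP (a i) (a i) = 1) : simOrd simP a a = 1 := by
  have hlen : ((min m m : ℕ) : ℝ) ≠ 0 := by
    rw [min_self]
    exact Nat.cast_ne_zero.2 hm.ne'
  simp only [simOrd, ha, Finset.sum_const, Finset.card_univ, Fintype.card_fin, nsmul_eq_mul,
    mul_one]
  exact div_self hlen

theorem simUnord_self (hm : 0 < m) (ha : ∀ i, simP (a i) (a i) = 1)
    (hle : ∀ i j, simP (a i) (a j) ≤ 1) : simUnord simP hm hm a a = 1 := by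
  have hbest (i : Fin m) : fmax hm (fun j => simP (a i) (a j)) = 1 :=
    (fmax_eq_of_forall_le hm fun j => (hle i j).trans_eq (ha i).symm).trans (ha i)
  have hlen : (m : ℝ) + m ≠ 0 := by positivity
  simp only [simUnord, hbest, Finset.sum_const, Finset.card_univ, Fintype.card_fin, nsmul_eq_mul,
    mul_one]
  exact div_self hlen

theorem simPara_self (lam : ℝ) (hm : 0 < m) (ha : ∀ i, simP (a i) (a i) = 1)
    (hle : ∀ i j, simP (a i) (a j) ≤ 1) : simPara simP lam hm hm a a = 1 := by
  rw [simPara, simOrd_self hm ha, simUnord_self hm ha hle]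
  ring

theorem simLweight_self {wp : τ → ℝ} {beta : τ → (k : ℕ) → (Fin k → τ) → τ} {lam : ℝ}
    (hm : 0 < m) {P : τ} (hP : simP P P = 1) (ha : ∀ i, simP (a i) (a i) = 1)
    (hle : ∀ i j, simP (a i) (a j) ≤ 1)
    (hweight : wp P * wp P + (lam * wOrd wp a a + (1 - lam) * wUnord wp beta a a) ≠ 0) :
    simLweight simP wp beta lam hm hm P P a a = 1 := by
  rw [simLweight, hP, simPara_self lam hm ha hle, mul_one, one_mul, div_self hweight]

end Similarity

section Weight

variable {τ : Type*} {wp : τ → ℝ} {m n : ℕ} {a : Fin m → τ} {b : Fin n → τ}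

theorem wOrd_nonneg (ha : ∀ i, 0 ≤ wp (a i)) (hb : ∀ j, 0 ≤ wp (b j)) : 0 ≤ wOrd wp a b :=
  Finset.sum_nonneg fun _ _ => mul_nonneg (ha _) (hb _)

theorem wUnord_nonneg {beta : τ → (k : ℕ) → (Fin k → τ) → τ}
    (ha : ∀ i, 0 ≤ wp (a i)) (hb : ∀ j, 0 ≤ wp (b j))
    (hab : ∀ i, ∃ j, beta (a i) n b = b j) (hba : ∀ j, ∃ i, beta (b j) m a = a i) :
    0 ≤ wUnord wp beta a b := by
  have hmatch_b (i : Fin m) : 0 ≤ wp (beta (a i) n b) := by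
    obtain ⟨j, hj⟩ := hab i
    exact hj ▸ hb j
  have hmatch_a (j : Fin n) : 0 ≤ wp (beta (b j) m a) := by
    obtain ⟨i, hi⟩ := hba j
    exact hi ▸ ha i
  exact add_nonneg (Finset.sum_nonneg fun i _ => mul_nonneg (ha i) (hmatch_b i))
    (Finset.sum_nonneg fun j _ => mul_nonneg (hb j) (hmatch_a j))

end Weight

theorem weighted_literal_self_similarity_general {τ : Type*} {simP : τ → τ → ℝ}
    {lam : ℝ} (hlam : lam ∈ Set.Icc 0 1) {wp : τ → ℝ}
    {beta : τ → (k : ℕ) → (Fin k → τ) → τ} {m : ℕ} (hm : 0 < m) {P : τ} {a : Fin m → τ}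
    (hP : simP P P = 1) (ha : ∀ i, simP (a i) (a i) = 1) (hle : ∀ i j, simP (a i) (a j) ≤ 1)
    (hwP : wp P ≠ 0) (hwa : ∀ i, 0 ≤ wp (a i)) (hbeta : ∀ i, ∃ j, beta (a i) m a = a j) :
    simLweight simP wp beta lam hm hm P P a a = 1 := by
  have hpred : 0 < wp P * wp P := mul_self_pos.2 hwP
  have hord : 0 ≤ lam * wOrd wp a a := mul_nonneg hlam.1 (wOrd_nonneg hwa hwa)
  have hunord : 0 ≤ (1 - lam) * wUnord wp beta a a :=
    mul_nonneg (sub_nonneg.2 hlam.2) (wUnord_nonneg hwa hwa hbeta hbeta)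
  exact simLweight_self hm hP ha hle (add_pos_of_pos_of_nonneg hpred (add_nonneg hord hunord)).ne'

/-- the weighted literal similarity of a literal with itself equals 1,
for any choice function `beta` selecting entries attaining the maxima. -/
theorem weighted_literal_self_similarity {τ : Type*} (simP : τ → τ → ℝ)
    (hbound : ∀ s t, 0 ≤ simP s t ∧ simP s t ≤ 1)
    (hrefl : ∀ t, simP t t = 1)
    (lam : ℝ) (hlam : 0 < lam ∧ lam < 1)
    (wp : τ → ℝ) (hwp : ∀ t, 0 < wp t)
    (beta : τ → (k : ℕ) → (Fin k → τ) → τ)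
    (hbeta : ∀ (x : τ) (k : ℕ) (hk : 0 < k) (y : Fin k → τ),
      (∃ j : Fin k, beta x k y = y j) ∧
      simP x (beta x k y) = fmax hk (fun j => simP x (y j)))
    {m : ℕ} (hm : 0 < m) (P : τ) (a : Fin m → τ) :
    simLweight simP wp beta lam hm hm P P a a = 1 := by
  exact weighted_literal_self_similarity_general ⟨hlam.1.le, hlam.2.le⟩ hm (hrefl P)
    (fun i => hrefl (a i)) (fun i j => (hbound (a i) (a j)).2) (hwp P).ne'
    (fun i => (hwp (a i)).le) fun i => (hbeta (a i) m hm a).1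
end

section
/- Let L be a type and simL : L → L → ℝ with 0 ≤ simL(x,y) ≤ 1 for all x,y, simL(x,x) = 1 for all x, and such that simL(x,y) = 1 implies x = y. Let α > 0. Then for all nonempty finite sets C₁, C₂ of elements of L, the symmetric fuzzy Tversky similarity satisfies Tve^{α,α}(C₁,C₂) = 1 if and only if C₁ = C₂. -/
open Finset

/-- Fuzzy membership of `x` in a nonempty clause `C`: the maximal similarity of `x`
with an element of `C`. -/
noncomputable def memb {L : Type*} (simL : L → L → ℝ) (x : L)
    (C : Finset L) (hC : C.Nonempty) : ℝ :=
  C.sup' hC (fun y => simL x y)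

/-- Fuzzy Tversky similarity between two nonempty clauses. -/
noncomputable def Tve {L : Type*} (simL : L → L → ℝ) (a b : ℝ)
    (C₁ C₂ : Finset L) (h₁ : C₁.Nonempty) (h₂ : C₂.Nonempty) : ℝ :=
  (((∑ x ∈ C₁, memb simL x C₂ h₂) + (∑ y ∈ C₂, memb simL y C₁ h₁)) / 2) /
  ((((∑ x ∈ C₁, memb simL x C₂ h₂) + (∑ y ∈ C₂, memb simL y C₁ h₁)) / 2) +
    a * (∑ x ∈ C₁, (1 - memb simL x C₂ h₂)) +
    b * (∑ y ∈ C₂, (1 - memb simL y C₁ h₁)))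

/-! The ratio `A / (A + αB + βD)` equals `1` exactly when `αB + βD = 0 ≠ A`. Since `B` and `D` are
sums of nonnegative terms `1 - ⊕(x, C)` and the weights are positive, this forces `B = D = 0`; and
a term `1 - ⊕(x, C)` vanishes only if the maximum `⊕(x, C)` attains the value `1`, that is, if
`x ∈ C`. So `B = 0` says `C₁ ⊆ C₂` and `D = 0` says `C₂ ⊆ C₁`. -/

section Tversky

variable {L : Type*} {simL : L → L → ℝ} {x : L} {C D : Finset L}

theorem memb_le_one (hle : ∀ y ∈ C, simL x y ≤ 1) (hC : C.Nonempty) : memb simL x C hC ≤ 1 :=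
  sup'_le hC _ hle

theorem memb_eq_one_iff_exists (hle : ∀ y ∈ C, simL x y ≤ 1) (hC : C.Nonempty) :
    memb simL x C hC = 1 ↔ ∃ y ∈ C, simL x y = 1 := by
  constructor
  · intro h
    obtain ⟨y, hy, hxy⟩ := exists_mem_eq_sup' hC (simL x)
    exact ⟨y, hy, hxy.symm.trans h⟩
  · rintro ⟨y, hy, hxy⟩
    exact (memb_le_one hle hC).antisymm (hxy.ge.trans (le_sup' (simL x) hy))

theorem memb_eq_one_iff_mem (hle : ∀ y ∈ C, simL x y ≤ 1) (hrefl : simL x x = 1)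
    (hsep : ∀ y ∈ C, simL x y = 1 → x = y) (hC : C.Nonempty) :
    memb simL x C hC = 1 ↔ x ∈ C := by
  rw [memb_eq_one_iff_exists hle hC]
  constructor
  · rintro ⟨y, hy, hxy⟩
    exact hsep y hy hxy ▸ hy
  · exact fun hx => ⟨x, hx, hrefl⟩

/-- The fuzzy cardinality of `C ∩ D`, the term `A` of the Tversky similarity: the mean of the
total membership of `C` in `D` and that of `D` in `C`. -/
noncomputable def fuzzyInter (simL : L → L → ℝ) (C D : Finset L) (hC : C.Nonempty)
    (hD : D.Nonempty) : ℝ :=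
  ((∑ x ∈ C, memb simL x D hD) + ∑ y ∈ D, memb simL y C hC) / 2

/-- The fuzzy cardinality of `C \ D`: the total failure of the elements of `C` to belong to `D`.
The terms `B` and `D` of the Tversky similarity are its values at `(C₁, C₂)` and `(C₂, C₁)`. -/
noncomputable def fuzzySdiff (simL : L → L → ℝ) (C D : Finset L) (hD : D.Nonempty) : ℝ :=
  ∑ x ∈ C, (1 - memb simL x D hD)

theorem fuzzyInter_self (hle : ∀ x ∈ C, ∀ y ∈ C, simL x y ≤ 1) (hrefl : ∀ x ∈ C, simL x x = 1)
    (hC : C.Nonempty) : fuzzyInter simL C C hC hC = #C := by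
  have hmemb : ∀ x ∈ C, memb simL x C hC = 1 := fun x hx =>
    (memb_eq_one_iff_exists (hle x hx) hC).2 ⟨x, hx, hrefl x hx⟩
  rw [fuzzyInter, sum_congr rfl hmemb, add_self_div_two, sum_const, nsmul_one]

theorem fuzzySdiff_nonneg (hle : ∀ x ∈ C, ∀ y ∈ D, simL x y ≤ 1) (hD : D.Nonempty) :
    0 ≤ fuzzySdiff simL C D hD :=
  sum_nonneg fun x hx => sub_nonneg.2 (memb_le_one (hle x hx) hD)

theorem fuzzySdiff_eq_zero_iff_subset (hle : ∀ x ∈ C, ∀ y ∈ D, simL x y ≤ 1)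
    (hrefl : ∀ x ∈ C, simL x x = 1) (hsep : ∀ x ∈ C, ∀ y ∈ D, simL x y = 1 → x = y)
    (hD : D.Nonempty) : fuzzySdiff simL C D hD = 0 ↔ C ⊆ D := by
  rw [fuzzySdiff, sum_eq_zero_iff_of_nonneg fun x hx => sub_nonneg.2 (memb_le_one (hle x hx) hD)]
  refine forall₂_congr fun x hx => ?_
  rw [sub_eq_zero, eq_comm, memb_eq_one_iff_mem (hle x hx) (hrefl x hx) (hsep x hx) hD]

theorem div_add_mul_add_mul_eq_one_iff {K : Type*} [Field K] [LinearOrder K]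
    [IsStrictOrderedRing K] {a b r s t : K} (ha : 0 < a) (hb : 0 < b) (hs : 0 ≤ s) (ht : 0 ≤ t) :
    r / (r + a * s + b * t) = 1 ↔ r ≠ 0 ∧ s = 0 ∧ t = 0 := by
  constructor
  · intro h
    have hr : r ≠ 0 := by
      rintro rfl
      simp at h
    have hsum : a * s + b * t = 0 := by linear_combination -eq_of_div_eq_one h
    rw [add_eq_zero_iff_of_nonneg (mul_nonneg ha.le hs) (mul_nonneg hb.le ht)] at hsum
    exact ⟨hr, (mul_eq_zero.1 hsum.1).resolve_left ha.ne',
      (mul_eq_zero.1 hsum.2).resolve_left hb.ne'⟩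
  · rintro ⟨hr, rfl, rfl⟩
    simp [hr]

theorem tve_eq_one_iff_fuzzySdiff_eq_zero (hle : ∀ x y, simL x y ≤ 1) {a b : ℝ} (ha : 0 < a)
    (hb : 0 < b) (hC : C.Nonempty) (hD : D.Nonempty) :
    Tve simL a b C D hC hD = 1 ↔
      fuzzyInter simL C D hC hD ≠ 0 ∧ fuzzySdiff simL C D hD = 0 ∧ fuzzySdiff simL D C hC = 0 :=
  div_add_mul_add_mul_eq_one_iff ha hb (fuzzySdiff_nonneg (fun x _ y _ => hle x y) hD)
    (fuzzySdiff_nonneg (fun x _ y _ => hle x y) hC)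

end Tversky

theorem tversky_eq_one_iff_general {L : Type*} (simL : L → L → ℝ) (hle : ∀ x y, simL x y ≤ 1)
    (hrefl : ∀ x, simL x x = 1) (hsep : ∀ x y, simL x y = 1 → x = y)
    (a b : ℝ) (ha : 0 < a) (hb : 0 < b)
    (C₁ C₂ : Finset L) (h₁ : C₁.Nonempty) (h₂ : C₂.Nonempty) :
    Tve simL a b C₁ C₂ h₁ h₂ = 1 ↔ C₁ = C₂ := by
  have sdiff_eq_zero_iff (C D : Finset L) (hD : D.Nonempty) :
      fuzzySdiff simL C D hD = 0 ↔ C ⊆ D :=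
    fuzzySdiff_eq_zero_iff_subset (fun x _ y _ => hle x y) (fun x _ => hrefl x)
      (fun x _ y _ => hsep x y) hD
  rw [tve_eq_one_iff_fuzzySdiff_eq_zero hle ha hb, sdiff_eq_zero_iff, sdiff_eq_zero_iff,
    ← Subset.antisymm_iff, and_iff_right_iff_imp]
  rintro rfl
  rw [fuzzyInter_self (fun x _ y _ => hle x y) fun x _ => hrefl x]
  exact_mod_cast h₁.card_ne_zero

/-- the symmetric fuzzy Tversky similarity equals 1 iff the clauses are
equal. -/
theorem tversky_eq_one_iff {L : Type*} (simL : L → L → ℝ)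
    (hbound : ∀ x y, 0 ≤ simL x y ∧ simL x y ≤ 1)
    (hrefl : ∀ x, simL x x = 1)
    (hsep : ∀ x y, simL x y = 1 → x = y)
    (a : ℝ) (ha : 0 < a)
    (C₁ C₂ : Finset L) (h₁ : C₁.Nonempty) (h₂ : C₂.Nonempty) :
    Tve simL a a C₁ C₂ h₁ h₂ = 1 ↔ C₁ = C₂ :=
  tversky_eq_one_iff_general simL (fun x y => (hbound x y).2) hrefl hsep a a ha ha C₁ C₂ h₁ h₂
end

section
/- Let K be a type, simC_flat, simC : K → K → ℝ, and w_g : K × K → ℝ with w_g(C₁,C₂) > 0 for all pairs. Assume simC_flat(C₁,C₂) ≤ 1 for all C₁,C₂, that simC_flat(C₁,C₂) = 1 if and only if C₁ = C₂, and that simC(C,C) = 1 for all C. Then for every nonempty finite set Φ ⊆ K, the best-match set similarity of Φ with itself equals 1: simS^bm(Φ,Φ) = 1. -/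
open Classical Finset

/-- Best-match relation between two nonempty finite sets of clauses: pairs `(C₁, C₂)`
where `C₂` attains the maximum of the flat clause similarity `simCflat C₁ ·` over the
other set (in either direction). -/
noncomputable def bm {K : Type*} (simCflat : K → K → ℝ) (Φ Ψ : Finset K)
    (hΦ : Φ.Nonempty) (hΨ : Ψ.Nonempty) : Finset (K × K) :=
  ((Φ ×ˢ Ψ).filter
      (fun p => simCflat p.1 p.2 = Ψ.sup' hΨ (fun C => simCflat p.1 C))) ∪
  ((Ψ ×ˢ Φ).filter
      (fun p => simCflat p.1 p.2 = Φ.sup' hΦ (fun C => simCflat p.1 C)))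

/-- Weighted average best-match similarity between two nonempty finite sets of
clauses. -/
noncomputable def simSbm {K : Type*} (simCflat simC : K → K → ℝ)
    (wg : K × K → ℝ) (Φ Ψ : Finset K) (hΦ : Φ.Nonempty) (hΨ : Ψ.Nonempty) : ℝ :=
  (∑ p ∈ bm simCflat Φ Ψ hΦ hΨ, wg p * simC p.1 p.2) /
  (∑ p ∈ bm simCflat Φ Ψ hΦ hΨ, wg p)

theorem eq_sup'_iff_isMaxOn {α β : Type*} [SemilatticeSup β] {s : Finset α} (hs : s.Nonempty)
    {f : α → β} {a : α} (ha : a ∈ s) : f a = s.sup' hs f ↔ IsMaxOn f s a :=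
  ⟨fun h _ hx => h ▸ le_sup' f hx, fun hmax => (le_sup' f ha).antisymm (sup'_le hs f hmax)⟩

theorem isMaxOn_iff_eq_of_forall_lt {α β : Type*} [Preorder β] {s : Set α} {f : α → β} {a b : α}
    (ha : a ∈ s) (hlt : ∀ x ∈ s, x ≠ a → f x < f a) (hb : b ∈ s) : IsMaxOn f s b ↔ b = a := by
  constructor
  · intro hmax
    by_contra hne
    exact (hlt b hb hne).not_ge (hmax ha)
  · rintro rfl x hx
    obtain rfl | hne := eq_or_ne x b
    exacts [le_rfl, (hlt x hx hne).le]

theorem lt_of_forall_le_of_eq_iff_eq {α β : Type*} [PartialOrder β] {f : α → β} {a x : α} {c : β}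
    (hle : ∀ y, f y ≤ c) (heq : ∀ y, f y = c ↔ a = y) (hne : x ≠ a) : f x < f a := by
  rw [(heq a).2 rfl]
  exact (hle x).lt_of_ne fun h => hne ((heq x).1 h).symm

section BestMatch

variable {K : Type*} {simCflat simC : K → K → ℝ} {wg : K × K → ℝ} {Φ Ψ : Finset K}

theorem mk_mem_bm (hΦ : Φ.Nonempty) (hΨ : Ψ.Nonempty) {C D : K} :
    (C, D) ∈ bm simCflat Φ Ψ hΦ hΨ ↔
      (C ∈ Φ ∧ D ∈ Ψ ∧ IsMaxOn (simCflat C) Ψ D) ∨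
        (C ∈ Ψ ∧ D ∈ Φ ∧ IsMaxOn (simCflat C) Φ D) := by
  simp only [bm, mem_union, mem_filter, mem_product, and_assoc]
  exact or_congr (and_congr_right fun _ => and_congr_right fun hD => eq_sup'_iff_isMaxOn hΨ hD)
    (and_congr_right fun _ => and_congr_right fun hD => eq_sup'_iff_isMaxOn hΦ hD)

theorem bm_self_eq_diag (hΦ : Φ.Nonempty)
    (hlt : ∀ C ∈ Φ, ∀ D ∈ Φ, D ≠ C → simCflat C D < simCflat C C) :
    bm simCflat Φ Φ hΦ hΦ = Φ.diag := by
  ext ⟨C, D⟩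
  rw [mk_mem_bm, or_self, mem_diag]
  constructor
  · rintro ⟨hC, hD, hmax⟩
    exact ⟨hC, ((isMaxOn_iff_eq_of_forall_lt hC (hlt C hC) hD).1 hmax).symm⟩
  · rintro ⟨hC, hCD⟩
    obtain rfl : C = D := hCD
    exact ⟨hC, hC, (isMaxOn_iff_eq_of_forall_lt hC (hlt C hC) hC).2 rfl⟩

theorem simSbm_self_eq_sum_div_sum (hΦ : Φ.Nonempty)
    (hlt : ∀ C ∈ Φ, ∀ D ∈ Φ, D ≠ C → simCflat C D < simCflat C C) :
    simSbm simCflat simC wg Φ Φ hΦ hΦ =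
      (∑ C ∈ Φ, wg (C, C) * simC C C) / ∑ C ∈ Φ, wg (C, C) := by
  rw [simSbm, bm_self_eq_diag hΦ hlt, sum_diag, sum_diag]

theorem simSbm_self_eq_one_general (hΦ : Φ.Nonempty) (hwg : ∑ C ∈ Φ, wg (C, C) ≠ 0)
    (hlt : ∀ C ∈ Φ, ∀ D ∈ Φ, D ≠ C → simCflat C D < simCflat C C)
    (hrefl : ∀ C ∈ Φ, simC C C = 1) :
    simSbm simCflat simC wg Φ Φ hΦ hΦ = 1 := by
  have hnum : ∑ C ∈ Φ, wg (C, C) * simC C C = ∑ C ∈ Φ, wg (C, C) :=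
    sum_congr rfl fun C hC => by rw [hrefl C hC, mul_one]
  rw [simSbm_self_eq_sum_div_sum hΦ hlt, hnum, div_self hwg]

end BestMatch

/-- the best-match set similarity of a nonempty finite set with itself
equals 1. -/
theorem simSbm_self_eq_one {K : Type*} (simCflat simC : K → K → ℝ)
    (wg : K × K → ℝ) (hwg : ∀ p, 0 < wg p)
    (hflat_le : ∀ C₁ C₂, simCflat C₁ C₂ ≤ 1)
    (hflat_one : ∀ C₁ C₂, simCflat C₁ C₂ = 1 ↔ C₁ = C₂)
    (hrefl : ∀ C, simC C C = 1)
    (Φ : Finset K) (hΦ : Φ.Nonempty) :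
    simSbm simCflat simC wg Φ Φ hΦ hΦ = 1 :=
  simSbm_self_eq_one_general hΦ (sum_pos (fun C _ => hwg (C, C)) hΦ).ne'
    (fun C _ _ _ => lt_of_forall_le_of_eq_iff_eq (hflat_le C) (hflat_one C)) fun C _ => hrefl C
end

section
/- Let K be a type, simC_flat, simC : K → K → ℝ, and w_g : K × K → ℝ with w_g(C₁,C₂) > 0 for all pairs. Assume simC(C₁,C₂) ≤ 1 for all C₁,C₂ and that simC(C₁,C₂) = 1 implies C₁ = C₂. Then for all nonempty finite sets Φ, Ψ ⊆ K, if the best-match set similarity satisfies simS^bm(Φ,Ψ) = 1, then Φ = Ψ. -/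
open Classical Finset

theorem eq_of_sum_mul_div_sum_eq_of_le {ι 𝕜 : Type*} [Field 𝕜] [LinearOrder 𝕜]
    [IsStrictOrderedRing 𝕜] {s : Finset ι} {w x : ι → 𝕜} {c : 𝕜}
    (hw : ∀ i ∈ s, 0 < w i) (hx : ∀ i ∈ s, x i ≤ c)
    (h : (∑ i ∈ s, w i * x i) / ∑ i ∈ s, w i = c) {i : ι} (hi : i ∈ s) : x i = c := by
  have hsum_pos : 0 < ∑ i ∈ s, w i := sum_pos hw ⟨i, hi⟩
  have hsum : ∑ i ∈ s, w i * x i = ∑ i ∈ s, w i * c := by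
    rw [← sum_mul, mul_comm, ← div_eq_iff hsum_pos.ne', h]
  have hterm : w i * x i = w i * c :=
    (sum_eq_sum_iff_of_le fun j hj => mul_le_mul_of_nonneg_left (hx j hj) (hw j hj).le).1 hsum i hi
  exact mul_left_cancel₀ (hw i hi).ne' hterm

section BestMatch

variable {K : Type*} {simCflat : K → K → ℝ} {Φ Ψ : Finset K} {hΦ : Φ.Nonempty} {hΨ : Ψ.Nonempty}

theorem bm_comm : bm simCflat Φ Ψ hΦ hΨ = bm simCflat Ψ Φ hΨ hΦ :=
  union_comm _ _

theorem exists_mem_bm_of_mem_left {C : K} (hC : C ∈ Φ) :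
    ∃ D ∈ Ψ, (C, D) ∈ bm simCflat Φ Ψ hΦ hΨ := by
  obtain ⟨D, hD, hmax⟩ := exists_mem_eq_sup' hΨ (simCflat C)
  exact ⟨D, hD, mem_union_left _ (mem_filter.2 ⟨mk_mem_product hC hD, hmax.symm⟩)⟩

theorem subset_of_forall_mem_bm_eq (h : ∀ p ∈ bm simCflat Φ Ψ hΦ hΨ, p.1 = p.2) : Φ ⊆ Ψ := by
  intro C hC
  obtain ⟨D, hD, hCD⟩ := exists_mem_bm_of_mem_left hC
  obtain rfl : C = D := h _ hCD
  exact hD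

theorem eq_of_forall_mem_bm_eq (h : ∀ p ∈ bm simCflat Φ Ψ hΦ hΨ, p.1 = p.2) : Φ = Ψ :=
  (subset_of_forall_mem_bm_eq h).antisymm (subset_of_forall_mem_bm_eq (bm_comm ▸ h))

end BestMatch

/-- if the best-match set similarity of two nonempty finite sets equals 1,
the sets are equal. -/
theorem simSbm_eq_one_implies_eq {K : Type*} (simCflat simC : K → K → ℝ)
    (wg : K × K → ℝ) (hwg : ∀ p, 0 < wg p)
    (hle : ∀ C₁ C₂, simC C₁ C₂ ≤ 1)
    (hone : ∀ C₁ C₂, simC C₁ C₂ = 1 → C₁ = C₂)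
    (Φ Ψ : Finset K) (hΦ : Φ.Nonempty) (hΨ : Ψ.Nonempty)
    (h : simSbm simCflat simC wg Φ Ψ hΦ hΨ = 1) :
    Φ = Ψ := by
  have hsim : ∀ p ∈ bm simCflat Φ Ψ hΦ hΨ, simC p.1 p.2 = 1 := fun _ hp =>
    eq_of_sum_mul_div_sum_eq_of_le (fun q _ => hwg q) (fun q _ => hle q.1 q.2) h hp
  exact eq_of_forall_mem_bm_eq fun p hp => hone p.1 p.2 (hsim p hp)
end

section
/- (Substitution, Theorem 3) Let simS be a real-valued function on pairs of nonempty finite sets of clauses with 0 ≤ simS(Φ₁,Φ₂) ≤ 1 for all Φ₁,Φ₂, and assume that simS(Φ₁,Φ₂) = 1 implies simS(Φ₁,Φ₃) = simS(Φ₂,Φ₃) for all Φ₃. Then for every η ∈ (0,1) and all compiled arguments A, B, C: if simArg_η(A,B) = 1 then simArg_η(A,C) = simArg_η(B,C). -/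
open Classical Finset

/-- A literal: a predicate symbol together with a nonempty finite vector of term
symbols (of length `n + 1`). -/
abbrev Lit (τ : Type*) := τ × Σ n : ℕ, Fin (n + 1) → τ

/-- A clause: a nonempty finite set of literals. -/
abbrev Clause (τ : Type*) := {C : Finset (Lit τ) // C.Nonempty}

/-- A nonempty finite set of clauses. -/
abbrev ClauseSet (τ : Type*) := {Φ : Finset (Clause τ) // Φ.Nonempty}

/-- A compiled argument: a support and a claim, each a nonempty finite set of
clauses. -/
structure CArg (τ : Type*) where
  supp : ClauseSet τ
  claim : ClauseSet τ

/-- Argument similarity: weighted combination of support and claim similarities. -/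
noncomputable def simArg {τ : Type*} (simS : ClauseSet τ → ClauseSet τ → ℝ)
    (η : ℝ) (A B : CArg τ) : ℝ :=
  η * simS A.supp B.supp + (1 - η) * simS A.claim B.claim

theorem convexCombination_eq_iff_of_le {R : Type*} [Semiring R] [LinearOrder R]
    [IsStrictOrderedRing R] {a b x y M : R} (ha : 0 < a) (hb : 0 < b) (hab : a + b = 1)
    (hx : x ≤ M) (hy : y ≤ M) :
    a * x + b * y = M ↔ x = M ∧ y = M :=
  calc a * x + b * y = M
    _ ↔ a * x + b * y = a * M + b * M := by rw [← add_mul, hab, one_mul]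
    _ ↔ a * x = a * M ∧ b * y = b * M :=
      add_eq_add_iff_eq_and_eq (mul_le_mul_of_nonneg_left hx ha.le)
        (mul_le_mul_of_nonneg_left hy hb.le)
    _ ↔ x = M ∧ y = M :=
      and_congr (mul_left_cancel_iff_of_pos ha) (mul_left_cancel_iff_of_pos hb)

/-- The Substitution property of a similarity measure: elements of similarity `1` are
interchangeable. Since `s` need not be symmetric, they are only interchanged as first
arguments. -/
def IsSubstitutive {α R : Type*} [One R] (s : α → α → R) : Prop :=
  ∀ x y, s x y = 1 → ∀ z, s x z = s y z

/-- The similarity of pairs that weights the similarity `s` of the first components by `η`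
and the similarity `t` of the second components by `1 - η`. The measure `simArg` is the case
`s = t`, with an argument read as the pair of its support and its claim. -/
def weightedSim {α β R : Type*} [Ring R] (s : α → α → R) (t : β → β → R) (η : R)
    (p q : α × β) : R :=
  η * s p.1 q.1 + (1 - η) * t p.2 q.2

section WeightedSim

variable {α β R : Type*} [Ring R] [LinearOrder R] [IsStrictOrderedRing R]
  {s : α → α → R} {t : β → β → R} {η : R}

theorem weightedSim_eq_one_iff (hs : ∀ x y, s x y ≤ 1) (ht : ∀ x y, t x y ≤ 1)
    (hη₀ : 0 < η) (hη₁ : η < 1) {p q : α × β} :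
    weightedSim s t η p q = 1 ↔ s p.1 q.1 = 1 ∧ t p.2 q.2 = 1 :=
  convexCombination_eq_iff_of_le hη₀ (sub_pos.2 hη₁) (add_sub_cancel η 1) (hs _ _) (ht _ _)

theorem substitution_general (hs : ∀ x y, s x y ≤ 1) (ht : ∀ x y, t x y ≤ 1)
    (hs_subst : IsSubstitutive s) (ht_subst : IsSubstitutive t) (hη₀ : 0 < η) (hη₁ : η < 1) :
    IsSubstitutive (weightedSim s t η) := by
  intro p q hpq r
  obtain ⟨hfst, hsnd⟩ := (weightedSim_eq_one_iff hs ht hη₀ hη₁).1 hpq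
  simp only [weightedSim, hs_subst _ _ hfst r.1, ht_subst _ _ hsnd r.2]

end WeightedSim

/-- Substitution, Theorem 3. -/
theorem substitution {τ : Type*} (simS : ClauseSet τ → ClauseSet τ → ℝ)
    (hbound : ∀ Φ₁ Φ₂, 0 ≤ simS Φ₁ Φ₂ ∧ simS Φ₁ Φ₂ ≤ 1)
    (hsub : ∀ Φ₁ Φ₂, simS Φ₁ Φ₂ = 1 → ∀ Φ₃, simS Φ₁ Φ₃ = simS Φ₂ Φ₃)
    (η : ℝ) (hη : 0 < η ∧ η < 1) (A B C : CArg τ)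
    (hAB : simArg simS η A B = 1) :
    simArg simS η A C = simArg simS η B C := by
  have hle : ∀ Φ₁ Φ₂, simS Φ₁ Φ₂ ≤ 1 := fun Φ₁ Φ₂ ↦ (hbound Φ₁ Φ₂).2
  exact substitution_general hle hle hsub hsub hη.1 hη.2
    (A.supp, A.claim) (B.supp, B.claim) hAB (C.supp, C.claim)
end

section
/- Let τ be a type, simP : τ → τ → ℝ with simP(s,t) ≥ 0 for all s,t, λ ∈ (0,1), and w_p : τ → ℝ with w_p(t) > 0 for all t. Let (P, a⃗) and (Q, b⃗) be literals with a⃗, b⃗ nonempty, and suppose either simP(P,Q) > 0, or there exists a position i ≤ min(|a⃗|,|b⃗|) with simP(a_i,b_i) > 0. Then the weighted literal similarity satisfies simL^{weight,λ}((P,a⃗),(Q,b⃗)) > 0. -/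
open Classical Finset

/-!
The weighted literal similarity is a weighted mean, with positive weights, of the predicate
similarity and the parameter similarity. Both are nonnegative, so it suffices that one of them is
positive. A positive similarity at a common position makes the ordered similarity positive, and
also the unordered one, because a best match is at least as good as the match at that position;
hence every convex combination of the two is positive, endpoints included.
-/

theorem weighted_mean_pos {K : Type*} [Field K] [LinearOrder K] [IsStrictOrderedRing K]
    {u v x y : K} (hu : 0 < u) (hv : 0 < v) (hx : 0 ≤ x) (hy : 0 ≤ y) (hxy : 0 < x ∨ 0 < y) :
    0 < (u * x + y * v) / (u + v) := by
  refine div_pos ?_ (add_pos hu hv)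
  rcases hxy with hx_pos | hy_pos
  · exact add_pos_of_pos_of_nonneg (mul_pos hu hx_pos) (mul_nonneg hy hv.le)
  · exact add_pos_of_nonneg_of_pos (mul_nonneg hu.le hx) (mul_pos hy_pos hv)

theorem le_fmax {n : ℕ} (hn : 0 < n) (f : Fin n → ℝ) (i : Fin n) : f i ≤ fmax hn f :=
  le_sup' f (mem_univ i)

theorem fmax_nonneg {n : ℕ} (hn : 0 < n) {f : Fin n → ℝ} (hf : ∀ i, 0 ≤ f i) : 0 ≤ fmax hn f :=
  (hf ⟨0, hn⟩).trans (le_fmax hn f _)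

section Similarity

variable {τ : Type*} {simP : τ → τ → ℝ} (hnn : ∀ s t, 0 ≤ simP s t) {lam : ℝ}
  (hlam : lam ∈ Set.Icc (0 : ℝ) 1) {m n : ℕ} (hm : 0 < m) (hn : 0 < n)
  (a : Fin m → τ) (b : Fin n → τ)

include hnn

theorem simOrd_nonneg : 0 ≤ simOrd simP a b :=
  div_nonneg (sum_nonneg fun _ _ => hnn _ _) (Nat.cast_nonneg _)

theorem simUnord_nonneg : 0 ≤ simUnord simP hm hn a b :=
  div_nonneg
    (add_nonneg (sum_nonneg fun _ _ => fmax_nonneg hn fun _ => hnn _ _)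
      (sum_nonneg fun _ _ => fmax_nonneg hm fun _ => hnn _ _))
    (by positivity)

include hlam in
theorem simPara_nonneg : 0 ≤ simPara simP lam hm hn a b :=
  convex_Ici (0 : ℝ) (simOrd_nonneg hnn a b) (simUnord_nonneg hnn hm hn a b)
    hlam.1 (sub_nonneg.2 hlam.2) (add_sub_cancel lam 1)

variable {a b}

theorem simOrd_pos {i : ℕ} (him : i < m) (hin : i < n)
    (hi : 0 < simP (a ⟨i, him⟩) (b ⟨i, hin⟩)) : 0 < simOrd simP a b := by
  have hmin : i < min m n := lt_min him hin
  exact div_pos (sum_pos' (fun _ _ => hnn _ _) ⟨⟨i, hmin⟩, mem_univ _, hi⟩)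
    (Nat.cast_pos.2 (Nat.zero_lt_of_lt hmin))

theorem simUnord_pos {i : Fin m} {j : Fin n} (hij : 0 < simP (a i) (b j)) :
    0 < simUnord simP hm hn a b := by
  have hbest : 0 < fmax hn fun k => simP (a i) (b k) :=
    hij.trans_le (le_fmax hn (fun k => simP (a i) (b k)) j)
  refine div_pos (add_pos_of_pos_of_nonneg ?_ ?_) (by positivity)
  · exact sum_pos' (fun _ _ => fmax_nonneg hn fun _ => hnn _ _) ⟨i, mem_univ i, hbest⟩
  · exact sum_nonneg fun _ _ => fmax_nonneg hm fun _ => hnn _ _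

include hlam in
theorem simPara_pos {i : ℕ} (him : i < m) (hin : i < n)
    (hi : 0 < simP (a ⟨i, him⟩) (b ⟨i, hin⟩)) : 0 < simPara simP lam hm hn a b :=
  convex_Ioi (0 : ℝ) (simOrd_pos hnn him hin hi) (simUnord_pos hnn hm hn hi)
    hlam.1 (sub_nonneg.2 hlam.2) (add_sub_cancel lam 1)

end Similarity

/-- The weight `λ · w_ord + (1 - λ) · w_unord` that the parameter similarity carries in
`simLweight`. -/
noncomputable def wPara {τ : Type*} (wp : τ → ℝ)
    (beta : τ → (k : ℕ) → (Fin k → τ) → τ) (lam : ℝ) {m n : ℕ}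
    (a : Fin m → τ) (b : Fin n → τ) : ℝ :=
  lam * wOrd wp a b + (1 - lam) * wUnord wp beta a b

section Weight

variable {τ : Type*} {wp : τ → ℝ} (hwp : ∀ t, 0 < wp t)
  (beta : τ → (k : ℕ) → (Fin k → τ) → τ) {lam : ℝ}
  (hlam : lam ∈ Set.Icc (0 : ℝ) 1) {m n : ℕ} (hm : 0 < m) (hn : 0 < n)
  (a : Fin m → τ) (b : Fin n → τ)

include hwp hm

include hn in
theorem wOrd_pos : 0 < wOrd wp a b :=
  sum_pos (fun _ _ => mul_pos (hwp _) (hwp _)) ⟨⟨0, lt_min hm hn⟩, mem_univ _⟩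

theorem wUnord_pos : 0 < wUnord wp beta a b :=
  add_pos_of_pos_of_nonneg
    (sum_pos (fun _ _ => mul_pos (hwp _) (hwp _)) ⟨⟨0, hm⟩, mem_univ _⟩)
    (sum_nonneg fun _ _ => (mul_pos (hwp _) (hwp _)).le)

include hlam hn in
theorem wPara_pos : 0 < wPara wp beta lam a b :=
  convex_Ioi (0 : ℝ) (wOrd_pos hwp hm hn a b) (wUnord_pos hwp beta hm a b)
    hlam.1 (sub_nonneg.2 hlam.2) (add_sub_cancel lam 1)

end Weight

theorem weighted_literal_pos_general {τ : Type*} (simP : τ → τ → ℝ)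
    (hnn : ∀ s t, 0 ≤ simP s t)
    (lam : ℝ) (hlam : lam ∈ Set.Icc (0 : ℝ) 1)
    (wp : τ → ℝ) (hwp : ∀ t, 0 < wp t)
    (beta : τ → (k : ℕ) → (Fin k → τ) → τ)
    (_hbeta : ∀ (x : τ) (k : ℕ) (hk : 0 < k) (y : Fin k → τ),
      (∃ j : Fin k, beta x k y = y j) ∧
      simP x (beta x k y) = fmax hk (fun j => simP x (y j)))
    {m n : ℕ} (hm : 0 < m) (hn : 0 < n)
    (P Q : τ) (a : Fin m → τ) (b : Fin n → τ)
    (hpos : 0 < simP P Q ∨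
      ∃ (i : ℕ) (him : i < m) (hin : i < n), 0 < simP (a ⟨i, him⟩) (b ⟨i, hin⟩)) :
    0 < simLweight simP wp beta lam hm hn P Q a b := by
  refine weighted_mean_pos (mul_pos (hwp P) (hwp Q)) (wPara_pos hwp beta hlam hm hn a b)
    (hnn P Q) (simPara_nonneg hnn hlam hm hn a b) ?_
  exact hpos.imp_right fun ⟨_, him, hin, hi⟩ => simPara_pos hnn hlam hm hn him hin hi

/-- if the predicate similarity is positive on the predicates, or at some
common position, then the weighted literal similarity is positive. -/
theorem weighted_literal_pos {τ : Type*} (simP : τ → τ → ℝ)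
    (hnn : ∀ s t, 0 ≤ simP s t)
    (lam : ℝ) (hlam : 0 < lam ∧ lam < 1)
    (wp : τ → ℝ) (hwp : ∀ t, 0 < wp t)
    (beta : τ → (k : ℕ) → (Fin k → τ) → τ)
    (hbeta : ∀ (x : τ) (k : ℕ) (hk : 0 < k) (y : Fin k → τ),
      (∃ j : Fin k, beta x k y = y j) ∧
      simP x (beta x k y) = fmax hk (fun j => simP x (y j)))
    {m n : ℕ} (hm : 0 < m) (hn : 0 < n)
    (P Q : τ) (a : Fin m → τ) (b : Fin n → τ)
    (hpos : 0 < simP P Q ∨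
      ∃ (i : ℕ) (him : i < m) (hin : i < n), 0 < simP (a ⟨i, him⟩) (b ⟨i, hin⟩)) :
    0 < simLweight simP wp beta lam hm hn P Q a b :=
  weighted_literal_pos_general simP hnn lam (Set.Ioo_subset_Icc_self hlam) wp hwp beta hbeta
    hm hn P Q a b hpos
end
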